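/- arXiv:1506.08300 — 5 statements merged into one kernel-verified Lean document; each statement's English description precedes it below -/
import Mathlib

section
/- Let G be a finite group. Then the following are equivalent: (a) for every automorphism f of G and every chain S of subgroups of G ending in G, the image of S under f equals S (i.e., the equivalence relation ≈ induced by the action of Aut(G) on such chains coincides with equality of chains); (b) G is cyclic. -/
/-!
Applied to the chains `{⟨g⟩, ⊤}`, condition (a) says that every automorphism `f` satisfies
`f g ∈ ⟨g⟩` for all `g`. Conversely, an endomorphism of a cyclic group is a power map, so its
automorphisms fix every subgroup.

Suppose all automorphisms preserve all cyclic subgroups. Inner automorphisms show that all cyclic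
subgroups are normal. If `G` were not abelian, a noncentral element `a` of least order would have
order `4` (`exists_orderOf_eq_four`), so every element would centralize or invert `a`. Then the map
which is the identity on the centralizer of `a` and `g ↦ a * g` off it is an automorphism that does
not preserve all cyclic subgroups (`central_of_conj_eq_or_inv`). This replaces an appeal to the
classification of Hamiltonian groups.

So `G` is abelian, a product of groups `ZMod (n i)`. If two of the `n i` had a common factor, a
shear would move a cyclic subgroup (`coprime_of_pi`); hence the `n i` are pairwise coprime, and `G`
is cyclic by the Chinese remainder theorem.
-/

/-- In a group all of whose automorphisms preserve all cyclic subgroups, an element `a` that is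
centralized or inverted by every element is central: otherwise `g ↦ g` on the centralizer of `a`
and `g ↦ a * g` off it is an automorphism, and it moves `⟨g₀⟩` for every `g₀` not commuting with
`a`. -/
theorem central_of_conj_eq_or_inv {G : Type*} [Group G] [Finite G]
    (h : ∀ (f : G ≃* G) (g : G), f g ∈ Subgroup.zpowers g) (a : G)
    (ha : ∀ g, g * a = a * g ∨ g * a = a⁻¹ * g) (g₀ : G) : g₀ * a = a * g₀ := by
  classical
  by_contra hg₀
  let F : G →* G := MonoidHom.mk' (fun g => if g * a = a * g then g else a * g) (by
    intro x y
    by_cases hx : x * a = a * x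
    · by_cases hy : y * a = a * y
      · have : x * y * a = a * (x * y) := by rw [mul_assoc, hy, ← mul_assoc, hx, mul_assoc]
        simp only [hx, hy, this, if_true]
      · have : ¬ x * y * a = a * (x * y) := fun e => hy (by
          rw [mul_assoc, ← mul_assoc a, ← hx, mul_assoc x a] at e
          exact mul_left_cancel e)
        simp only [hx, hy, this, if_true, if_false]
        rw [← mul_assoc, ← mul_assoc, hx]
    · have hx' := (ha x).resolve_left hx
      by_cases hy : y * a = a * y
      · have : ¬ x * y * a = a * (x * y) := fun e => hx (by
          rw [mul_assoc, hy, ← mul_assoc, ← mul_assoc] at e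
          exact mul_right_cancel e)
        simp only [hx, hy, this, if_true, if_false]
        rw [mul_assoc]
      · have hy' := (ha y).resolve_left hy
        have hxi : x * a⁻¹ = a * x := by
          rw [mul_inv_eq_iff_eq_mul, mul_assoc, hx', mul_inv_cancel_left]
        have : x * y * a = a * (x * y) := by
          rw [mul_assoc, hy', ← mul_assoc, hxi, mul_assoc]
        simp only [hx, hy, this, if_true, if_false]
        rw [mul_assoc, ← mul_assoc x, hx']; group)
  have hF : Function.Injective F := by
    rw [injective_iff_map_eq_one]
    intro g hg
    change (if g * a = a * g then g else a * g) = 1 at hg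
    split_ifs at hg with hc
    · exact hg
    · rw [eq_inv_of_mul_eq_one_right hg] at hc
      exact absurd (by group) hc
  have := h (MulEquiv.ofBijective F (Finite.injective_iff_bijective.mp hF)) g₀
  change (if g₀ * a = a * g₀ then g₀ else a * g₀) ∈ _ at this
  rw [if_neg hg₀] at this
  have ha0 : a ∈ Subgroup.zpowers g₀ :=
    (Subgroup.mul_mem_cancel_right _ (Subgroup.mem_zpowers g₀)).1 this
  obtain ⟨k, rfl⟩ := Subgroup.mem_zpowers_iff.1 ha0
  exact hg₀ (by group)

theorem conj_eq_or_inv_of_orderOf_eq_four {G : Type*} [Group G]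
    (hD : ∀ g x : G, g * x * g⁻¹ ∈ Subgroup.zpowers x) {a : G} (ha : orderOf a = 4) (g : G) :
    g * a = a * g ∨ g * a = a⁻¹ * g := by
  have hf : IsOfFinOrder a := orderOf_pos_iff.1 (by omega)
  obtain ⟨k, hk⟩ := (hf.mem_powers_iff_mem_zpowers).2 (hD g a)
  have h4 : a ^ 4 = 1 := ha ▸ pow_orderOf_eq_one a
  have h2 : a ^ 2 ≠ 1 := pow_ne_one_of_lt_orderOf (by norm_num) (by omega)
  simp only at hk
  rw [← pow_mod_orderOf, ha] at hk
  have hlt : k % 4 < 4 := Nat.mod_lt _ (by norm_num)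
  have hsq : g * a ^ 2 * g⁻¹ = (a ^ (k % 4)) ^ 2 := by rw [hk, conj_pow]
  have key : a ^ (k % 4) * g = g * a := by rw [hk]; group
  rw [← key]
  have hbad : g * a ^ 2 * g⁻¹ ≠ 1 := by simpa using h2
  interval_cases k % 4
  · exact absurd (by simpa using hsq) hbad
  · left; simp
  · exact absurd (by rw [hsq, ← pow_mul, h4]) hbad
  · right; rw [eq_inv_of_mul_eq_one_left (a := a^3) (b := a) (by rw [← pow_succ, h4])]

theorem pow_mul_comm_central {G : Type*} [Group G] {x y z : G} (hxy : y * x = x * y * z)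
    (hy : Commute z y) (n : ℕ) :
    y ^ n * x = x * y ^ n * z ^ n := by
  induction n with
  | zero => simp
  | succ n ih =>
    calc y ^ (n + 1) * x = y ^ n * (y * x) := by rw [pow_succ, mul_assoc]
      _ = (y ^ n * x) * (y * z) := by rw [hxy]; group
      _ = x * y ^ n * (z ^ n * y) * z := by rw [ih]; group
      _ = x * y ^ (n + 1) * z ^ (n + 1) := by
        rw [(hy.pow_left n).eq, pow_succ, pow_succ]; group

/-- The power formula for two elements whose commutator `z` commutes with both. -/
theorem mul_pow_of_central {G : Type*} [Group G] {x y z : G} (hxy : y * x = x * y * z)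
    (hx : Commute z x) (hy : Commute z y) (n : ℕ) :
    (x * y) ^ n = x ^ n * y ^ n * z ^ (n.choose 2) := by
  induction n with
  | zero => simp
  | succ n ih =>
    have hzxy : Commute (z ^ n.choose 2) (x * y) := (hx.mul_right hy).pow_left _
    calc (x * y) ^ (n + 1) = x ^ n * y ^ n * (z ^ n.choose 2 * (x * y)) := by
          rw [pow_succ, ih]; group
      _ = x ^ n * (y ^ n * x) * y * z ^ n.choose 2 := by rw [hzxy.eq]; group
      _ = x ^ n * x * y ^ n * (z ^ n * y) * z ^ n.choose 2 := by
          rw [pow_mul_comm_central hxy hy]; group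
      _ = x ^ (n + 1) * y ^ (n + 1) * z ^ ((n + 1).choose 2) := by
          rw [(hy.pow_left n).eq, Nat.choose_succ_succ' n 1, Nat.choose_one_right, pow_add z,
            pow_succ x, pow_succ y]; group

theorem mul_pow_comm_central {G : Type*} [Group G] {x y z : G} (hxy : y * x = x * y * z)
    (hx : Commute z x) (n : ℕ) :
    y * x ^ n = x ^ n * y * z ^ n := by
  induction n with
  | zero => simp
  | succ n ih =>
    calc y * x ^ (n + 1) = (y * x ^ n) * x := by rw [pow_succ, mul_assoc]
      _ = x ^ n * y * (z ^ n * x) := by rw [ih]; group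
      _ = x ^ n * (y * x) * z ^ n := by rw [(hx.pow_left n).eq]; group
      _ = x ^ (n + 1) * y * z ^ (n + 1) := by
        rw [hxy, pow_succ x, pow_succ' z]; group

/-- If all cyclic subgroups are normal, the commutator of `a` and `b` lies in `⟨a⟩ ∩ ⟨b⟩`. -/
theorem exists_commutator {G : Type*} [Group G] [Finite G]
    (hD : ∀ g x : G, g * x * g⁻¹ ∈ Subgroup.zpowers x) {a b : G} (hab : ¬ Commute a b) :
    ∃ c, a * b = b * a * c ∧ c ≠ 1 ∧ Commute c a ∧ Commute c b ∧
      (∃ r : ℕ, a ^ r = c) ∧ ∃ s : ℕ, b ^ s = c := by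
  have h1 : a⁻¹ * b⁻¹ * a * b ∈ Subgroup.zpowers a := by
    have := mul_mem (inv_mem (Subgroup.mem_zpowers a)) (hD b⁻¹ a)
    simpa [mul_assoc] using this
  have h2 : a⁻¹ * b⁻¹ * a * b ∈ Subgroup.zpowers b := by
    have := mul_mem (inv_mem (hD a⁻¹ b)) (Subgroup.mem_zpowers b)
    simpa [mul_assoc] using this
  obtain ⟨r, hr⟩ := mem_powers_iff_mem_zpowers.2 h1
  obtain ⟨s, hs⟩ := mem_powers_iff_mem_zpowers.2 h2
  simp only at hr hs
  refine ⟨a⁻¹ * b⁻¹ * a * b, by group, fun e => hab ?_, ?_, ?_, ⟨r, hr⟩, ⟨s, hs⟩⟩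
  · change a * b = b * a
    calc a * b = b * a * (a⁻¹ * b⁻¹ * a * b) := by group
      _ = b * a := by rw [e, mul_one]
  · rw [← hr]; exact (Commute.refl a).pow_left r
  · rw [← hs]; exact (Commute.refl b).pow_left s

/-- A prime power `p ^ m` with `m ≥ 1` and `p ∤ (p ^ m choose 2)` is `2`. -/
theorem eq_two_of_not_dvd_choose {p m : ℕ} (hp : p.Prime) (hm : m ≠ 0)
    (h : ¬ p ∣ (p ^ m).choose 2) : p = 2 ∧ m = 1 := by
  have h2 : (p ^ m).choose 2 * 2 = p ^ m * (p ^ m - 1) := by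
    rw [Nat.choose_two_right, Nat.div_mul_cancel (Nat.even_mul_pred_self _).two_dvd]
  have hp2 : p = 2 := by
    by_contra hne
    have : p ∣ (p ^ m).choose 2 * 2 := h2 ▸ (dvd_pow_self p hm).mul_right _
    rcases hp.dvd_mul.1 this with h' | h'
    · exact h h'
    · exact hne ((Nat.prime_dvd_prime_iff_eq hp Nat.prime_two).1 h')
  subst hp2
  refine ⟨rfl, ?_⟩
  by_contra hm1
  have h4 : 2 ^ 2 ∣ 2 ^ m := pow_dvd_pow 2 (by omega)
  have : 2 * 2 ∣ (2 ^ m).choose 2 * 2 := by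
    rw [h2]; exact (by simpa [pow_two] using h4 : 2 * 2 ∣ 2 ^ m).mul_right _
  exact h (Nat.dvd_of_mul_dvd_mul_right (by norm_num) this)

/-- In a nonabelian finite group with all cyclic subgroups normal, a noncentral element `a` of
least order has order `4`. Minimality forces `a` to have prime power order `p ^ (m + 1)` and its
commutator `c` with any noncommuting `b` to have order `p`. Taking `b` of `p`-power order, a
suitable `x = b ^ J * a` is noncentral and satisfies `x ^ (p ^ m) = c ^ (J * (p ^ m choose 2))`;
minimality makes this nontrivial, so `p = 2` and `m = 1`. -/
theorem exists_orderOf_eq_four {G : Type*} [Group G] [Finite G]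
    (hD : ∀ g x : G, g * x * g⁻¹ ∈ Subgroup.zpowers x) (hG : ∃ a b : G, ¬ Commute a b) :
    ∃ a b : G, ¬ Commute a b ∧ orderOf a = 4 := by
  obtain ⟨a, ⟨b₀, hb₀⟩, hmin⟩ := Set.exists_min_image {a : G | ∃ b, ¬ Commute a b} orderOf
    (Set.toFinite _) hG
  have hmin' : ∀ x y : G, ¬ Commute x y → orderOf a ≤ orderOf x := fun x y h => hmin x ⟨y, h⟩
  have hpow : ∀ q, q.Prime → q ∣ orderOf a → ∀ b c, a * b = b * a * c → Commute c a → c ^ q = 1 := by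
    intro q hq hqa b c hc hca
    have hcomm : Commute (a ^ q) b := by
      by_contra hn
      have h1 := hmin' _ _ hn
      rw [orderOf_pow_of_dvd hq.ne_zero hqa] at h1
      exact absurd h1 (not_le.2 (Nat.div_lt_self (orderOf_pos a) hq.one_lt))
    have h1 := pow_mul_comm_central hc hca q
    rw [hcomm.eq] at h1
    exact (left_eq_mul.1 h1)
  have ha1 : orderOf a ≠ 1 := fun e => hb₀ (by rw [orderOf_eq_one_iff.1 e]; exact Commute.one_left _)
  obtain ⟨p, hp, hpa⟩ := Nat.exists_prime_and_dvd ha1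
  have : Fact p.Prime := ⟨hp⟩
  obtain ⟨c₀, hc₀, hc₀1, hc₀a, hc₀b, -, -⟩ := exists_commutator hD hb₀
  have hoc₀ : orderOf c₀ = p := orderOf_eq_prime (hpow p hp hpa _ _ hc₀ hc₀a) hc₀1
  have hN : orderOf a = p ^ (orderOf a).primeFactorsList.length :=
    Nat.eq_prime_pow_of_unique_prime_dvd (orderOf_pos a).ne' (fun {q} hq hqa => by
      have := orderOf_dvd_of_pow_eq_one (hpow q hq hqa _ _ hc₀ hc₀a)
      rw [hoc₀] at this
      exact ((Nat.prime_dvd_prime_iff_eq hp hq).1 this).symm)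
  obtain ⟨m, hm⟩ : ∃ m, orderOf a = p ^ (m + 1) := by
    rcases hk : (orderOf a).primeFactorsList.length with _ | m
    · rw [hk] at hN; exact absurd hN ha1
    · exact ⟨m, by rw [hk] at hN; exact hN⟩
  -- a power of `b₀` of `p`-power order still does not commute with `a`
  obtain ⟨e, q, hpq, heq⟩ := Nat.exists_eq_pow_mul_and_not_dvd (orderOf_pos b₀).ne' p hp.ne_one
  obtain ⟨b, hab, hbe⟩ : ∃ b, ¬ Commute a b ∧ orderOf b = p ^ e := by
    have hq0 : q ≠ 0 := by rintro rfl; simp at hpq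
    refine ⟨b₀ ^ q, fun hcomm => hpq ?_, ?_⟩
    · have h1 := mul_pow_comm_central hc₀ hc₀b q
      rw [hcomm.eq] at h1
      rw [← hoc₀]
      exact orderOf_dvd_of_pow_eq_one (left_eq_mul.1 h1)
    · rw [orderOf_pow_of_dvd hq0 ⟨p ^ e, by rw [heq, mul_comm]⟩, heq,
        Nat.mul_div_cancel _ (Nat.pos_of_ne_zero hq0)]
  obtain ⟨c, hc, hc1, hca, hcb, ⟨r, hr⟩, ⟨s, hs⟩⟩ := exists_commutator hD hab
  have hcp := hpow p hp hpa _ _ hc hca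
  have hoc : orderOf c = p := orderOf_eq_prime hcp hc1
  have hme : m + 1 ≤ e := by
    have := hmin' b a (fun h => hab h.symm)
    rw [hm, hbe] at this
    exact (Nat.pow_le_pow_iff_right hp.one_lt).1 this
  have hdvd : ∀ {k}, p ^ (m + 1) ∣ k * p → p ^ m ∣ k := fun {k} h => by
    rw [pow_succ] at h; exact Nat.dvd_of_mul_dvd_mul_right hp.pos h
  obtain ⟨r', rfl⟩ : p ^ m ∣ r := hdvd (by
    rw [← hm]; exact orderOf_dvd_of_pow_eq_one (by rw [pow_mul, hr, hcp]))
  obtain ⟨s', rfl⟩ : p ^ m ∣ s := hdvd ((pow_dvd_pow p hme).trans (by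
    rw [← hbe]; exact orderOf_dvd_of_pow_eq_one (by rw [pow_mul, hs, hcp])))
  -- `⟨c⟩ ≤ ⟨a ^ (p ^ m)⟩`, and both have order `p`
  obtain ⟨t, ht⟩ : ∃ t : ℕ, c ^ t = a ^ p ^ m := by
    have hle : Subgroup.zpowers c ≤ Subgroup.zpowers (a ^ p ^ m) := by
      rw [Subgroup.zpowers_le, ← hr, pow_mul]
      exact Subgroup.npow_mem_zpowers _ _
    have heq := Subgroup.eq_of_le_of_card_ge hle (by
      rw [Nat.card_zpowers, Nat.card_zpowers, hoc,
        orderOf_pow_of_dvd (pow_pos hp.pos m).ne' (by rw [hm]; exact pow_dvd_pow p m.le_succ), hm,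
        pow_succ, Nat.mul_div_cancel_left _ (pow_pos hp.pos m)])
    have : a ^ p ^ m ∈ Subgroup.zpowers c := heq ▸ Subgroup.mem_zpowers _
    exact mem_powers_iff_mem_zpowers.2 this
  have hm0 : m ≠ 0 := by
    rintro rfl
    rw [pow_zero, pow_one] at ht
    exact hab (ht ▸ hcb.pow_left t)
  -- `J` is chosen so that `b ^ (J * p ^ m)` cancels `a ^ (p ^ m)`
  set J := s' * (t * (p - 1)) with hJ
  have hbJ : (b ^ J) ^ p ^ m = c ^ (t * (p - 1)) := by
    rw [← hs, ← pow_mul, ← pow_mul, hJ]; congr 1; ring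
  have hx : (b ^ J * a) ^ p ^ m = c ^ (J * (p ^ m).choose 2) := by
    rw [mul_pow_of_central (mul_pow_comm_central hc hcb J) ((hcb.pow_left J).pow_right J)
      (hca.pow_left J), hbJ, ← ht, ← pow_add, ← pow_mul]
    have : t * (p - 1) + t = p * t := by
      obtain ⟨p', rfl⟩ := Nat.exists_eq_add_of_le' hp.one_le
      simp; ring
    rw [this, pow_mul c p, hcp, one_pow, one_mul]
  have hxb : ¬ Commute (b ^ J * a) b := fun h => hab (by
    have := ((Commute.refl b).pow_left J).inv_left.mul_left h
    rwa [inv_mul_cancel_left] at this)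
  have hnd : ¬ p ∣ (p ^ m).choose 2 := fun hd => by
    have h1 : (b ^ J * a) ^ p ^ m = 1 := by
      rw [hx]; exact orderOf_dvd_iff_pow_eq_one.1 (hoc ▸ hd.mul_left J)
    have h2 := Nat.le_of_dvd (pow_pos hp.pos m) (orderOf_dvd_of_pow_eq_one h1)
    have h3 := (hmin' _ _ hxb).trans h2
    rw [hm, Nat.pow_le_pow_iff_right hp.one_lt] at h3
    omega
  obtain ⟨rfl, rfl⟩ := eq_two_of_not_dvd_choose hp hm0 hnd
  exact ⟨a, b, hab, hm⟩

/-- If `d = gcd (n i) (n j) > 1` with `i ≠ j`, the shear adding to coordinate `j` the image of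
coordinate `i` under `1 ↦ n j / d` is an automorphism moving the subgroup generated by the `i`-th
unit vector. -/
theorem coprime_of_pi {ι : Type*} [DecidableEq ι] (n : ι → ℕ) (hn : ∀ i, 1 < n i)
    (h : ∀ (f : (∀ i, ZMod (n i)) ≃+ (∀ i, ZMod (n i))) (x), ∃ k : ℤ, f x = k • x) :
    Pairwise (Function.onFun Nat.Coprime n) := by
  intro i j hij
  by_contra hd
  change ¬ Nat.gcd (n i) (n j) = 1 at hd
  obtain ⟨r, hr⟩ := Nat.gcd_dvd_left (n i) (n j)
  obtain ⟨s, hs⟩ := Nat.gcd_dvd_right (n i) (n j)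
  set d := Nat.gcd (n i) (n j) with hdd
  have hwd : zmultiplesHom (ZMod (n j)) (s : ZMod (n j)) (n i : ℤ) = 0 := by
    simp only [zmultiplesHom_apply, natCast_zsmul, nsmul_eq_mul]
    rw [← Nat.cast_mul, ZMod.natCast_eq_zero_iff, hr]
    exact ⟨r, by rw [hs]; ring⟩
  let φ : ZMod (n i) →+ ZMod (n j) := ZMod.lift (n i) ⟨zmultiplesHom _ (s : ZMod (n j)), hwd⟩
  have hφ : φ 1 = s := by
    have := ZMod.lift_coe (n i) ⟨zmultiplesHom (ZMod (n j)) (s : ZMod (n j)), hwd⟩ 1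
    simpa using this
  let f : (∀ i, ZMod (n i)) ≃+ (∀ i, ZMod (n i)) :=
    { toFun := fun x => x + Pi.single j (φ (x i))
      invFun := fun x => x - Pi.single j (φ (x i))
      left_inv := fun x => by simp [hij]
      right_inv := fun x => by simp [hij]
      map_add' := fun x y => by simp only [Pi.add_apply, map_add, Pi.single_add]; abel }
  obtain ⟨k, hk⟩ := h f (Pi.single i 1)
  have := congrFun hk j
  change (Pi.single i 1 + Pi.single j (φ ((Pi.single i 1 : ∀ i, ZMod (n i)) i)) :
    ∀ i, ZMod (n i)) j = _ at this
  simp only [Pi.add_apply, Pi.single_eq_same, Pi.smul_apply, Pi.single_eq_of_ne hij.symm, hφ,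
    zero_add, smul_zero] at this
  rw [ZMod.natCast_eq_zero_iff, hs] at this
  have hj := hn j
  have hs0 : 0 < s := Nat.pos_of_ne_zero (by rintro rfl; omega)
  have hle := Nat.le_of_dvd hs0 this
  have hd0 : d ≠ 0 := by intro e; rw [e] at hs; omega
  have : 2 ≤ d := by omega
  nlinarith

theorem isCyclic_of_comm {G : Type*} [CommGroup G] [Finite G]
    (h : ∀ (f : G ≃* G) (g : G), f g ∈ Subgroup.zpowers g) : IsCyclic G := by
  classical
  obtain ⟨ι, _, n, hn, ⟨e'⟩⟩ := AddCommGroup.equiv_directSum_zmod_of_finite' (Additive G)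
  let e : Additive G ≃+ (∀ i, ZMod (n i)) := e'.trans (DirectSum.addEquivProd _)
  have hco := coprime_of_pi n hn (fun f x => by
    obtain ⟨k, hk⟩ := Subgroup.mem_zpowers_iff.1
      (h (AddEquiv.toMultiplicative ((e.trans f).trans e.symm)) (e.symm x).toMul)
    refine ⟨k, ?_⟩
    have h2 : k • e.symm x = e.symm (f (e (e.symm x))) := congrArg Additive.ofMul hk
    rw [e.apply_symm_apply] at h2
    apply e.symm.injective
    rw [← h2, map_zsmul])
  rw [← isAddCyclic_additive_iff]
  exact isAddCyclic_of_surjective ((ZMod.prodEquivPi n hco).toAddEquiv.trans e.symm)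
    (AddEquiv.surjective _)

/-- For a finite group `G`, every chain of subgroups ending in `G` is
mapped to itself by every automorphism (so the equivalence relation `≈` induced by
the action of `Aut(G)` on such chains coincides with equality of chains) iff `G`
is cyclic. -/
theorem fixed_chains_iff_cyclic (G : Type*) [Group G] [Finite G] :
    (∀ (f : G ≃* G) (S : Finset (Subgroup G)),
        IsChain (· ≤ ·) (S : Set (Subgroup G)) → (⊤ : Subgroup G) ∈ S →
        (fun H => Subgroup.map f.toMonoidHom H) '' (S : Set (Subgroup G))
          = (S : Set (Subgroup G))) ↔
      IsCyclic G := by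
  constructor
  · intro hS
    have h : ∀ (f : G ≃* G) (g : G), f g ∈ Subgroup.zpowers g := by
      classical
      intro f g
      have h1 := hS f {Subgroup.zpowers g, ⊤} (by
        rw [Finset.coe_pair]; exact IsChain.pair le_top) (by simp)
      have h2 : Subgroup.map f.toMonoidHom (Subgroup.zpowers g) ∈
          (({Subgroup.zpowers g, ⊤} : Finset (Subgroup G)) : Set (Subgroup G)) := by
        rw [← h1]; exact ⟨_, by simp, rfl⟩
      have h3 : f g ∈ Subgroup.map f.toMonoidHom (Subgroup.zpowers g) :=
        ⟨g, Subgroup.mem_zpowers g, rfl⟩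
      simp only [Finset.coe_pair, Set.mem_insert_iff, Set.mem_singleton_iff] at h2
      rcases h2 with h2 | h2
      · rwa [h2] at h3
      · -- an automorphism maps only `⊤` onto `⊤`
        have h4 : Subgroup.zpowers g = ⊤ := by
          apply Subgroup.map_injective (f := f.toMonoidHom) f.injective
          exact h2.trans (Subgroup.map_top_of_surjective _ f.surjective).symm
        rw [h4]; trivial
    have hD : ∀ g x : G, g * x * g⁻¹ ∈ Subgroup.zpowers x := fun g x => h (MulAut.conj g) x
    have hcomm : ∀ a b : G, a * b = b * a := by
      by_contra! hne
      obtain ⟨a, b, hab, ha⟩ := exists_orderOf_eq_four hD hne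
      exact hab (central_of_conj_eq_or_inv h a (conj_eq_or_inv_of_orderOf_eq_four hD ha) b).symm
    let _ : CommGroup G := { ‹Group G› with mul_comm := hcomm }
    exact isCyclic_of_comm h
  · intro _ f S _ _
    have hfix : ∀ H : Subgroup G, Subgroup.map f.toMonoidHom H = H := by
      intro H
      obtain ⟨m, hm⟩ := f.toMonoidHom.map_cyclic
      refine Subgroup.eq_of_le_of_card_ge ?_
        (Subgroup.card_map_of_injective (f := f.toMonoidHom) f.injective).ge
      rintro _ ⟨x, hx, rfl⟩
      rw [hm]
      exact H.zpow_mem hx m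
    simp only [hfix, Set.image_id']
end

section
/- Let p be a prime and let G be a finite abelian p-group that is not cyclic. Then G possesses two distinct maximal subgroups M₁ ≠ M₂ and an automorphism f of G such that f(M₁) = M₂. In particular, G has a subgroup that is not invariant under all automorphisms of G. -/
/-!
By the structure theorem, `G ≅ ∏ i, ℤ/n i` with every `n i > 1`; the `n i` are powers of `p`, and
non-cyclicity gives two distinct indices, which can be named `i`, `j` so that `n j ∣ n i`.
Let `χ` be the `j`-th coordinate reduced modulo `p`, and let `f` be the shear adding the `i`-th
coordinate (reduced modulo `n j`) to the `j`-th one. The kernel `M₁` of `χ` has index `p`, so it is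
maximal, and so is its image `M₂ = f(M₁)`. The `i`-th basis vector lies in `M₁`, but its image
under `f` does not, so `M₁ ≠ M₂`.
-/

/-- A character onto a cyclic group of prime order whose kernel is not preserved by an
automorphism `f` provides the two maximal subgroups `ker χ` and `f (ker χ)`. -/
lemma exists_coatoms_of_character {p : ℕ} (hp : p.Prime) {G : Type*} [CommGroup G]
    (χ : G →* Multiplicative (ZMod p)) (f : G ≃* G) (x : G) (hx : χ x = 1)
    (hfx : χ (f x) ≠ 1) :
    ∃ (M₁ M₂ : Subgroup G), IsCoatom M₁ ∧ IsCoatom M₂ ∧ M₁ ≠ M₂ ∧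
        ∃ f : G ≃* G, Subgroup.map f.toMonoidHom M₁ = M₂ := by
  have : Fact p.Prime := ⟨hp⟩
  have hcard : Nat.card (Multiplicative (ZMod p)) = p := by simp
  have hrange : χ.range = ⊤ := by
    have : Fact (Nat.card (Multiplicative (ZMod p))).Prime := ⟨hcard.symm ▸ hp⟩
    refine (Subgroup.eq_bot_or_eq_top_of_prime_card χ.range).resolve_left fun h => hfx ?_
    exact Subgroup.mem_bot.1 (h ▸ ⟨f x, rfl⟩)
  have hidx : χ.ker.index = p := by
    rw [Subgroup.index_ker, hrange, Subgroup.card_top, hcard]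
  have hco : IsCoatom χ.ker := by
    refine ⟨fun h => hfx ?_, fun K hK => ?_⟩
    · exact χ.mem_ker.1 (h ▸ Subgroup.mem_top _)
    · have hd : K.index ∣ p := hidx ▸ Subgroup.index_dvd_of_le hK.le
      rcases (Nat.dvd_prime hp).1 hd with h | h
      · exact Subgroup.index_eq_one.1 h
      · have h1 := Subgroup.relIndex_mul_index hK.le
        rw [h, hidx] at h1
        have h2 : χ.ker.relIndex K = 1 := Nat.eq_of_mul_eq_mul_right hp.pos (by simpa using h1)
        exact absurd (Subgroup.relIndex_eq_one.1 h2) hK.not_ge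
  refine ⟨χ.ker, χ.ker.map f.toMonoidHom, hco, ?_, ?_, f, rfl⟩
  · exact (OrderIso.isCoatom_iff f.mapSubgroup χ.ker).2 hco
  · intro h
    have : f x ∈ χ.ker := by
      rw [h]
      exact ⟨x, hx, rfl⟩
    exact hfx this

/-- The automorphism of a product of commutative groups multiplying the `j`-th coordinate
by the image under `φ` of the `i`-th one, for `i ≠ j`. -/
def shear {ι : Type*} [DecidableEq ι] {A : ι → Type*} [∀ i, CommGroup (A i)] {i j : ι}
    (hij : i ≠ j) (φ : A i →* A j) : (∀ i, A i) ≃* (∀ i, A i) where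
  toFun x := x * Pi.mulSingle j (φ (x i))
  invFun x := x * (Pi.mulSingle j (φ (x i)))⁻¹
  left_inv x := by simp [Pi.mulSingle_eq_of_ne hij]
  right_inv x := by simp [Pi.mulSingle_eq_of_ne hij]
  map_mul' x y := by
    simp only [Pi.mul_apply, map_mul, Pi.mulSingle_mul]
    exact mul_mul_mul_comm _ _ _ _

/-- A finite abelian `p`-group that is not cyclic has two distinct
maximal subgroups `M₁ ≠ M₂` and an automorphism mapping `M₁` onto `M₂`; in
particular it has a subgroup that is not invariant under all automorphisms. -/
theorem exists_maximal_subgroups_aut_map (p : ℕ) (hp : p.Prime)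
    (G : Type*) [CommGroup G] [Finite G] (hpG : IsPGroup p G) (hnc : ¬IsCyclic G) :
    (∃ (M₁ M₂ : Subgroup G), IsCoatom M₁ ∧ IsCoatom M₂ ∧ M₁ ≠ M₂ ∧
        ∃ f : G ≃* G, Subgroup.map f.toMonoidHom M₁ = M₂) ∧
      ∃ (H : Subgroup G) (f : G ≃* G), Subgroup.map f.toMonoidHom H ≠ H := by
  classical
  suffices h : ∃ (M₁ M₂ : Subgroup G), IsCoatom M₁ ∧ IsCoatom M₂ ∧ M₁ ≠ M₂ ∧
        ∃ f : G ≃* G, Subgroup.map f.toMonoidHom M₁ = M₂ by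
    refine ⟨h, ?_⟩
    obtain ⟨M₁, M₂, -, -, hne, f, hf⟩ := h
    exact ⟨M₁, f, fun h => hne (h.symm.trans hf)⟩
  have : Fact p.Prime := ⟨hp⟩
  obtain ⟨ι, _, n, hn, ⟨e⟩⟩ := CommGroup.equiv_prod_multiplicative_zmod_of_finite G
  have hι : Nontrivial ι := by
    by_contra hι
    rw [not_nontrivial_iff_subsingleton] at hι
    apply hnc
    rw [e.isCyclic]
    rcases isEmpty_or_nonempty ι with h | ⟨⟨i⟩⟩
    · infer_instance
    · have : Unique ι := uniqueOfSubsingleton i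
      rw [(MulEquiv.piUnique fun i => Multiplicative (ZMod (n i))).isCyclic]
      infer_instance
  have hpow : ∀ i, ∃ k, n i = p ^ k := by
    intro i
    have : NeZero (n i) := ⟨by have := hn i; omega⟩
    have h1 : IsPGroup p (Multiplicative (ZMod (n i))) :=
      (hpG.of_equiv e).of_injective
        (MonoidHom.mulSingle (fun i => Multiplicative (ZMod (n i))) i)
        (Pi.mulSingle_injective (M := fun i => Multiplicative (ZMod (n i))) i)
    simpa using IsPGroup.iff_card.1 h1
  obtain ⟨i, j, hij, hdvd⟩ : ∃ i j, i ≠ j ∧ n j ∣ n i := by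
    obtain ⟨i, j, hij⟩ := exists_pair_ne ι
    obtain ⟨a, ha⟩ := hpow i
    obtain ⟨b, hb⟩ := hpow j
    rcases le_total a b with h | h
    · exact ⟨j, i, hij.symm, ha ▸ hb ▸ pow_dvd_pow p h⟩
    · exact ⟨i, j, hij, ha ▸ hb ▸ pow_dvd_pow p h⟩
  have hpj : p ∣ n j := by
    obtain ⟨b, hb⟩ := hpow j
    have := hn j
    rw [hb] at this ⊢
    exact dvd_pow_self p (by rintro rfl; simp at this)
  let φ : Multiplicative (ZMod (n i)) →* Multiplicative (ZMod (n j)) :=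
    AddMonoidHom.toMultiplicative (ZMod.castHom hdvd (ZMod (n j))).toAddMonoidHom
  let ψ : Multiplicative (ZMod (n j)) →* Multiplicative (ZMod p) :=
    AddMonoidHom.toMultiplicative (ZMod.castHom hpj (ZMod p)).toAddMonoidHom
  have hφ : φ (Multiplicative.ofAdd 1) = Multiplicative.ofAdd 1 :=
    congrArg Multiplicative.ofAdd (map_one (ZMod.castHom hdvd (ZMod (n j))))
  have hψ : ψ (Multiplicative.ofAdd 1) = Multiplicative.ofAdd 1 :=
    congrArg Multiplicative.ofAdd (map_one (ZMod.castHom hpj (ZMod p)))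
  let χ : G →* Multiplicative (ZMod p) :=
    (ψ.comp (Pi.evalMonoidHom (fun i => Multiplicative (ZMod (n i))) j)).comp e.toMonoidHom
  refine exists_coatoms_of_character hp χ ((e.trans (shear hij φ)).trans e.symm)
    (e.symm (Pi.mulSingle i (Multiplicative.ofAdd 1))) ?_ ?_
  · simp [χ, Pi.mulSingle_eq_of_ne hij.symm]
  · simp [χ, shear, Pi.mulSingle_eq_of_ne hij.symm, hφ, hψ]
end

section
/- Let Q be the quaternion group of order 8 (with presentation ⟨x, y ∣ x⁴ = 1, x² = y², y⁻¹xy = x⁻¹⟩), let k be a natural number, and let A be a finite abelian group of odd order. Then the group G = Q × (ℤ/2ℤ)^k × A admits an automorphism f and a subgroup H such that f(H) ≠ H; indeed, the cyclic subgroups generated by (x,1,1) and (y,1,1) are distinct and some automorphism of G maps the former onto the latter. -/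
/-!
The quaternion group has an automorphism exchanging its standard generators `x = a 1` and
`y = xa 0` (`quaternionSwap`). Its product with the identity on the other factors carries
`⟨(x,1,1)⟩` onto `⟨(y,1,1)⟩`. These subgroups differ because `x` and `y` do not commute, so
`⟨(x,1,1)⟩` is not invariant under this automorphism.
-/

/-- The map `xⁱ ↦ yⁱ`, `y xʲ ↦ x yʲ` on the quaternion group of order 8, where `x = a 1` and
`y = xa 0`; exponents are represented in `{0, 1, 2, 3}`. -/
def quaternionSwapFun : QuaternionGroup 2 → QuaternionGroup 2
  | .a i => .xa 0 ^ i.val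
  | .xa j => .a 1 * .xa 0 ^ j.val

/-- The involutive automorphism of the quaternion group of order 8 exchanging the generators
`a 1` and `xa 0`. -/
def quaternionSwap : QuaternionGroup 2 ≃* QuaternionGroup 2 where
  toFun := quaternionSwapFun
  invFun := quaternionSwapFun
  left_inv := by unfold Function.LeftInverse; decide
  right_inv := by unfold Function.RightInverse Function.LeftInverse; decide
  map_mul' := by decide

/-- For `G = Q₈ × (ℤ/2ℤ)^k × A` with `A` finite abelian of odd order,
there is an automorphism `f` and a subgroup `H` of `G` with `f(H) ≠ H`; indeed the
cyclic subgroups generated by `(x,1,1)` and `(y,1,1)` (where `x, y` are the standard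
generators of `Q₈`) are distinct and some automorphism maps the former onto the
latter. -/
theorem quaternion_times_elementary_times_odd_not_all_subgroups_invariant
    (k : ℕ) (A : Type*) [CommGroup A] [Finite A] (hA : Odd (Nat.card A)) :
    (∃ (f : (QuaternionGroup 2 × (Fin k → Multiplicative (ZMod 2)) × A) ≃*
            (QuaternionGroup 2 × (Fin k → Multiplicative (ZMod 2)) × A))
       (H : Subgroup (QuaternionGroup 2 × (Fin k → Multiplicative (ZMod 2)) × A)),
        Subgroup.map f.toMonoidHom H ≠ H) ∧
    Subgroup.zpowers ((QuaternionGroup.a 1, 1, 1) :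
        QuaternionGroup 2 × (Fin k → Multiplicative (ZMod 2)) × A) ≠
      Subgroup.zpowers ((QuaternionGroup.xa 0, 1, 1) :
        QuaternionGroup 2 × (Fin k → Multiplicative (ZMod 2)) × A) ∧
    ∃ f : (QuaternionGroup 2 × (Fin k → Multiplicative (ZMod 2)) × A) ≃*
          (QuaternionGroup 2 × (Fin k → Multiplicative (ZMod 2)) × A),
      Subgroup.map f.toMonoidHom
          (Subgroup.zpowers ((QuaternionGroup.a 1, 1, 1) :
            QuaternionGroup 2 × (Fin k → Multiplicative (ZMod 2)) × A)) =
        Subgroup.zpowers ((QuaternionGroup.xa 0, 1, 1) :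
          QuaternionGroup 2 × (Fin k → Multiplicative (ZMod 2)) × A) := by
  -- Equal cyclic subgroups would make the two generators commute.
  have hne : Subgroup.zpowers ((QuaternionGroup.a 1, 1, 1) :
        QuaternionGroup 2 × (Fin k → Multiplicative (ZMod 2)) × A) ≠
      Subgroup.zpowers ((QuaternionGroup.xa 0, 1, 1) :
        QuaternionGroup 2 × (Fin k → Multiplicative (ZMod 2)) × A) := by
    intro h
    have hmem := Subgroup.mem_zpowers ((QuaternionGroup.xa 0, 1, 1) :
        QuaternionGroup 2 × (Fin k → Multiplicative (ZMod 2)) × A)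
    rw [← h] at hmem
    obtain ⟨n, hn⟩ := Subgroup.mem_zpowers_iff.mp hmem
    have hcomm := (Commute.refl ((QuaternionGroup.a 1, 1, 1) :
        QuaternionGroup 2 × (Fin k → Multiplicative (ZMod 2)) × A)).zpow_right n
    rw [hn] at hcomm
    exact absurd (congrArg Prod.fst hcomm.eq)
      (show (QuaternionGroup.a 1 * QuaternionGroup.xa 0 : QuaternionGroup 2) ≠
        QuaternionGroup.xa 0 * QuaternionGroup.a 1 by decide)
  have hmap : Subgroup.map
      (quaternionSwap.prodCongr
        (MulEquiv.refl ((Fin k → Multiplicative (ZMod 2)) × A))).toMonoidHom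
      (Subgroup.zpowers (QuaternionGroup.a 1, 1, 1)) =
        Subgroup.zpowers (QuaternionGroup.xa 0, 1, 1) := by
    rw [MonoidHom.map_zpowers]
    congr 1
  exact ⟨⟨_, _, fun h => hne (h.symm.trans hmap)⟩, hne, _, hmap⟩
end

section
/- The number of chains of subgroups of the dihedral group D₈ of order 8 ending in D₈ is exactly 32. -/
/-!
`DihedralGroup 4` has exactly ten subgroups: the trivial one, the five generated by an involution,
the cyclic group of rotations, two Klein four-groups, and the whole group.  `exists_eq_elements`
shows the list is complete by testing all 256 subsets for closure under multiplication
(in a finite group, inverses are then automatic).  The subgroup lattice is thus isomorphic to the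
explicit poset of ten element sets ordered by inclusion (`subgroupOf_bijective`, `subgroupOf_le`),
so chains correspond to chains of indices (`chainEquiv`).  Those
containing the top index are counted by enumerating the subsets of a ten-element index set.
-/

open DihedralGroup

namespace ChainsDihedral8

/-- The element sets of the ten subgroups; index `9` is the whole group. -/
def elements : Fin 10 → Finset (DihedralGroup 4) :=
  ![{r 0},
    {r 0, r 2}, {r 0, sr 0}, {r 0, sr 1}, {r 0, sr 2}, {r 0, sr 3},
    {r 0, r 1, r 2, r 3}, {r 0, r 2, sr 0, sr 2}, {r 0, r 2, sr 1, sr 3},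
    Finset.univ]

/-- The subgroup with element set `elements i`. -/
def subgroupOf (i : Fin 10) : Subgroup (DihedralGroup 4) where
  carrier := elements i
  mul_mem' {a b} := by
    simp only [Finset.mem_coe]
    revert i a b
    decide +kernel
  one_mem' := by
    simp only [Finset.mem_coe]
    revert i
    decide +kernel
  inv_mem' {a} := by
    simp only [Finset.mem_coe]
    revert i a
    decide +kernel

lemma mem_subgroupOf {i : Fin 10} {x : DihedralGroup 4} :
    x ∈ subgroupOf i ↔ x ∈ elements i := Iff.rfl

lemma subgroupOf_le {i j : Fin 10} :
    subgroupOf i ≤ subgroupOf j ↔ elements i ⊆ elements j := Iff.rfl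

lemma elements_injective : Function.Injective elements := by
  decide +kernel

lemma exists_eq_elements : ∀ A ∈ (Finset.univ : Finset (DihedralGroup 4)).powerset,
    1 ∈ A → (∀ x ∈ A, ∀ y ∈ A, x * y ∈ A) → ∃ i, elements i = A := by
  decide +kernel

lemma subgroupOf_bijective : Function.Bijective subgroupOf := by
  classical
  refine ⟨fun i j h => elements_injective ?_, fun H => ?_⟩
  · exact Finset.Subset.antisymm (subgroupOf_le.1 h.le) (subgroupOf_le.1 h.ge)
  · obtain ⟨i, hi⟩ := exists_eq_elements {x | x ∈ H} (by simp) (by simp [H.one_mem])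
      (by simpa using fun x hx y hy => H.mul_mem hx hy)
    exact ⟨i, by ext x; simp [mem_subgroupOf, hi]⟩

lemma subgroupOf_nine : subgroupOf 9 = ⊤ :=
  eq_top_iff.2 fun x _ => Finset.mem_univ x

/-- The ten indices correspond bijectively to the subgroups. -/
noncomputable def subgroupEquiv : Fin 10 ≃ Subgroup (DihedralGroup 4) :=
  Equiv.ofBijective subgroupOf subgroupOf_bijective

/-- A set of indices is a chain containing the index `9` of the whole group; stated with bounded
quantifiers so that it is decidable. -/
abbrev IsTopChain (T : Finset (Fin 10)) : Prop :=
  9 ∈ T ∧ ∀ i ∈ T, ∀ j ∈ T, elements i ⊆ elements j ∨ elements j ⊆ elements i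

lemma card_isTopChain : ((Finset.univ : Finset (Fin 10)).powerset.filter IsTopChain).card = 32 := by
  decide +kernel

lemma isTopChain_iff (T : Finset (Fin 10)) :
    IsTopChain T ↔
      IsChain (· ≤ ·) (T.map subgroupEquiv.toEmbedding : Set (Subgroup (DihedralGroup 4))) ∧
        (⊤ : Subgroup (DihedralGroup 4)) ∈ T.map subgroupEquiv.toEmbedding := by
  have h9 : subgroupEquiv 9 = ⊤ := subgroupOf_nine
  have hle (i j : Fin 10) : subgroupEquiv i ≤ subgroupEquiv j ↔ elements i ⊆ elements j :=
    subgroupOf_le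
  rw [and_comm, ← h9]
  refine and_congr (by simp) ⟨?_, ?_⟩
  · intro h x hx y hy _
    simp only [Finset.coe_map, Set.mem_image, Finset.mem_coe] at hx hy
    obtain ⟨i, hi, rfl⟩ := hx
    obtain ⟨j, hj, rfl⟩ := hy
    exact h i hi j hj
  · intro h i hi j hj
    rw [← hle, ← hle]
    exact h.total (by simpa using hi) (by simpa using hj)

/-- Transport of chains along `subgroupEquiv`. -/
noncomputable def chainEquiv : {T : Finset (Fin 10) // IsTopChain T} ≃
    {S : Finset (Subgroup (DihedralGroup 4)) //
        IsChain (· ≤ ·) (S : Set (Subgroup (DihedralGroup 4))) ∧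
          (⊤ : Subgroup (DihedralGroup 4)) ∈ S} :=
  subgroupEquiv.finsetCongr.subtypeEquiv isTopChain_iff

end ChainsDihedral8

open ChainsDihedral8 in
/-- The dihedral group of order 8 has exactly 32 chains of
subgroups ending in the full group. -/
theorem card_chains_dihedral8 :
    Nat.card {S : Finset (Subgroup (DihedralGroup 4)) //
        IsChain (· ≤ ·) (S : Set (Subgroup (DihedralGroup 4))) ∧
          (⊤ : Subgroup (DihedralGroup 4)) ∈ S} = 32 := by
  rw [← Nat.card_congr chainEquiv, Nat.card_eq_fintype_card, Fintype.card_subtype,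
    ← Finset.powerset_univ]
  exact card_isTopChain
end

section
/- The number of equivalence classes, under the action of the automorphism group, of chains of subgroups of the dihedral group D₈ of order 8 ending in D₈ is exactly 16. (Here two chains S₁, S₂ are equivalent iff there is an automorphism f of D₈ with {f(H) : H ∈ S₁} = S₂.) -/
/-!
Up to automorphism, every chain lives in a fixed sublattice of six subgroups. For `k < 3` and
`e < 2` let `std (k, e)` be the subgroup generated by the rotations killed by `2 ^ k` and, if
`e = 1`, the reflection `sr 0`. The map `std` is an order embedding of the `3 × 2` grid, whose
image consists of the subgroups that contain `sr 0` or no reflection at all.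

In a chain containing `⊤`, the smallest member that contains a reflection supplies a reflection
common to all such members; an automorphism carries it to `sr 0`, and hence the chain into the
image of `std` (`exists_grid_chain`). Conversely, an automorphism never relates two different
subgroups `std p` and `std q` (`std_eq_of_map_eq`). So the classes correspond to the chains of the
grid containing its top element, and there are 16 of those.
-/

namespace ChainD8

open DihedralGroup

/-- The subgroup of `D₈` formed by the rotations `r i` with `2 ^ k * i = 0` and, when `e = 1`, the
reflections `sr i` with `2 ^ k * i = 0`, where `p = (k, e)`. -/
def std (p : Fin 3 × Fin 2) : Subgroup (DihedralGroup 4) where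
  carrier := {x | match x with
    | r i => 2 ^ p.1.val * i = 0
    | sr i => p.2 = 1 ∧ 2 ^ p.1.val * i = 0}
  one_mem' := mul_zero _
  mul_mem' := by
    rintro (i | i) (j | j) <;> simp +contextual [mul_add, mul_sub]
  inv_mem' := by
    rintro (i | i) <;> simp

@[simp]
lemma r_mem_std (p : Fin 3 × Fin 2) (i : ZMod 4) : r i ∈ std p ↔ 2 ^ p.1.val * i = 0 := Iff.rfl

@[simp]
lemma sr_mem_std (p : Fin 3 × Fin 2) (i : ZMod 4) :
    sr i ∈ std p ↔ p.2 = 1 ∧ 2 ^ p.1.val * i = 0 := Iff.rfl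

lemma std_le_std {p q : Fin 3 × Fin 2} : std p ≤ std q ↔ p ≤ q := by
  have h : std p ≤ std q ↔ (∀ i : ZMod 4, 2 ^ p.1.val * i = 0 → 2 ^ q.1.val * i = 0) ∧
      ∀ i : ZMod 4, p.2 = 1 ∧ 2 ^ p.1.val * i = 0 → q.2 = 1 ∧ 2 ^ q.1.val * i = 0 :=
    ⟨fun h => ⟨fun i => @h (r i), fun i => @h (sr i)⟩, fun h x => by
      rcases x with i | i
      · exact h.1 i
      · exact h.2 i⟩
  rw [h]
  clear h
  revert p q
  decide

lemma std_injective : Function.Injective std := fun _ _ h =>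
  le_antisymm (std_le_std.1 h.le) (std_le_std.1 h.ge)

lemma std_top : std ⊤ = ⊤ := by
  rw [eq_top_iff]
  have h : ∀ i : ZMod 4, 2 ^ (⊤ : Fin 3 × Fin 2).1.val * i = 0 := by decide
  rintro (i | i) -
  · exact h i
  · exact ⟨rfl, h i⟩

/-- The rotations of a subgroup are those killed by some `2 ^ k`. -/
lemma exists_rotation_level (H : Subgroup (DihedralGroup 4)) :
    ∃ k : Fin 3, ∀ i : ZMod 4, r i ∈ H ↔ 2 ^ k.val * i = 0 := by
  have h12 : (r 1 : DihedralGroup 4) ∈ H → (r 2 : DihedralGroup 4) ∈ H :=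
    fun h => H.mul_mem h h
  have h13 : (r 1 : DihedralGroup 4) ∈ H ↔ (r 3 : DihedralGroup 4) ∈ H :=
    (H.inv_mem_iff (x := r 1)).symm
  have key : ∀ k : Fin 3, ((r 1 : DihedralGroup 4) ∈ H ↔ 2 ^ k.val * (1 : ZMod 4) = 0) →
      ((r 2 : DihedralGroup 4) ∈ H ↔ 2 ^ k.val * (2 : ZMod 4) = 0) →
      ∀ i : ZMod 4, r i ∈ H ↔ 2 ^ k.val * i = 0 := by
    intro k h1 h2 i
    have hk : 2 ^ k.val * (1 : ZMod 4) = 0 ↔ 2 ^ k.val * (3 : ZMod 4) = 0 := by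
      clear h1 h2; revert k; decide
    have hi : i = 0 ∨ i = 1 ∨ i = 2 ∨ i = 3 := by revert i; decide
    rcases hi with rfl | rfl | rfl | rfl
    · simp
    · exact h1
    · exact h2
    · rw [← h13, h1, hk]
  by_cases h1 : (r 1 : DihedralGroup 4) ∈ H
  · exact ⟨2, key 2 (iff_of_true h1 (by decide)) (iff_of_true (h12 h1) (by decide))⟩
  by_cases h2 : (r 2 : DihedralGroup 4) ∈ H
  · exact ⟨1, key 1 (iff_of_false h1 (by decide)) (iff_of_true h2 (by decide))⟩
  · exact ⟨0, key 0 (iff_of_false h1 (by decide)) (iff_of_false h2 (by decide))⟩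

lemma exists_std_eq (H : Subgroup (DihedralGroup 4))
    (hH : (∀ i, sr i ∉ H) ∨ sr 0 ∈ H) : ∃ p, std p = H := by
  obtain ⟨k, hk⟩ := exists_rotation_level H
  rcases hH with hH | hH
  · refine ⟨(k, 0), ?_⟩
    ext (i | i)
    · simp [hk]
    · simp [hH]
  · refine ⟨(k, 1), ?_⟩
    ext (i | i)
    · simp [hk]
    · have h : sr i ∈ H ↔ r i ∈ H := by
        rw [← H.mul_mem_cancel_left hH (y := r i)]
        simp
      simp [h, hk]

/-- The automorphism of `D₈` fixing the rotations and sending `sr i` to `sr 0`. -/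
def shift (i : ZMod 4) : DihedralGroup 4 ≃* DihedralGroup 4 where
  toFun x := match x with
    | r j => r j
    | sr j => sr (j - i)
  invFun x := match x with
    | r j => r j
    | sr j => sr (j + i)
  left_inv := by rintro (j | j) <;> simp
  right_inv := by rintro (j | j) <;> simp
  map_mul' := by
    rintro (j | j) (l | l) <;> simp <;> ring

lemma mem_map_shift_sr (i j : ZMod 4) (H : Subgroup (DihedralGroup 4)) :
    sr j ∈ H.map (shift i).toMonoidHom ↔ sr (j + i) ∈ H :=
  Subgroup.mem_map_equiv

/-- Every automorphism maps rotations to rotations: `r 1` goes to an element of order four. -/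
lemma exists_map_r (f : DihedralGroup 4 ≃* DihedralGroup 4) :
    ∃ u : ZMod 4, (u = 1 ∨ u = -1) ∧ ∀ i, f (r i) = r (u * i) := by
  have hord : ∀ x : DihedralGroup 4, x * x ≠ 1 → ∃ u : ZMod 4, (u = 1 ∨ u = -1) ∧ x = r u := by
    rintro (i | i)
    · revert i; decide
    · simp
  obtain ⟨u, hu, hfu⟩ := hord (f (r 1)) (by
    rw [← map_mul, Ne, EmbeddingLike.map_eq_one_iff]
    decide)
  refine ⟨u, hu, fun i => ?_⟩
  have hi : (r i : DihedralGroup 4) = r 1 ^ i.val := by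
    simp
  rw [hi, map_pow, hfu, r_pow, ZMod.natCast_zmod_val]

lemma exists_map_sr (f : DihedralGroup 4 ≃* DihedralGroup 4) (i : ZMod 4) :
    ∃ j, f (sr i) = sr j := by
  obtain ⟨u, hu, hf⟩ := exists_map_r f
  rcases h : f (sr i) with j | j
  · have h' : f (r (u * j)) = f (sr i) := by
      rw [hf, h]
      rcases hu with rfl | rfl <;> simp
    simpa using f.injective h'
  · exact ⟨j, rfl⟩

lemma le_of_map_le {f : DihedralGroup 4 ≃* DihedralGroup 4} {p q : Fin 3 × Fin 2}
    (h : (std p).map f.toMonoidHom ≤ std q) : p ≤ q := by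
  have hmem : ∀ x ∈ std p, f x ∈ std q := fun x hx => h (Subgroup.mem_map_of_mem _ hx)
  obtain ⟨u, hu, hf⟩ := exists_map_r f
  have h1 : ∀ i : ZMod 4, 2 ^ p.1.val * i = 0 → 2 ^ q.1.val * i = 0 := by
    intro i hi
    have := hmem (r i) hi
    rw [hf, r_mem_std] at this
    rcases hu with rfl | rfl <;> simpa using this
  have h2 : p.2 = 1 → q.2 = 1 := by
    intro hp
    obtain ⟨j, hj⟩ := exists_map_sr f 0
    have := hmem (sr 0) ⟨hp, mul_zero _⟩
    rw [hj, sr_mem_std] at this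
    exact this.1
  clear hmem h
  revert p q
  decide

lemma std_eq_of_map_eq {f : DihedralGroup 4 ≃* DihedralGroup 4} {p q : Fin 3 × Fin 2}
    (h : (std p).map f.toMonoidHom = std q) : p = q := by
  refine le_antisymm (le_of_map_le h.le) (le_of_map_le (f := f.symm) ?_)
  rw [← h, Subgroup.map_map]
  rintro _ ⟨x, hx, rfl⟩
  simpa using hx

/-- The chains of subgroups of `D₈` ending in `D₈`. -/
abbrev Chain : Type := {S : Finset (Subgroup (DihedralGroup 4)) //
  IsChain (· ≤ ·) (S : Set (Subgroup (DihedralGroup 4))) ∧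
    (⊤ : Subgroup (DihedralGroup 4)) ∈ S}

/-- Two chains are related when an automorphism of `D₈` carries the first to the second. -/
abbrev Rel (S₁ S₂ : Chain) : Prop :=
  ∃ f : DihedralGroup 4 ≃* DihedralGroup 4,
    (fun H => Subgroup.map f.toMonoidHom H) ''
        ((S₁ : Finset (Subgroup (DihedralGroup 4))) : Set (Subgroup (DihedralGroup 4)))
      = ((S₂ : Finset (Subgroup (DihedralGroup 4))) : Set (Subgroup (DihedralGroup 4)))

/-- The chains of the `3 × 2` grid containing its top element. -/
abbrev GridChain : Type :=
  {T : Finset (Fin 3 × Fin 2) // (∀ x ∈ T, ∀ y ∈ T, x ≤ y ∨ y ≤ x) ∧ ⊤ ∈ T}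

/-- The chain of subgroups `std p`, for `p` in a chain of the grid. -/
def toChain (T : GridChain) : Chain :=
  ⟨T.1.map ⟨std, std_injective⟩, by
    constructor
    · intro H hH K hK _
      simp only [Finset.coe_map, Function.Embedding.coeFn_mk, Set.mem_image,
        SetLike.mem_coe] at hH hK
      obtain ⟨p, hp, rfl⟩ := hH
      obtain ⟨q, hq, rfl⟩ := hK
      simpa only [std_le_std] using T.2.1 p hp q hq
    · exact Finset.mem_map.2 ⟨⊤, T.2.2, std_top⟩⟩

lemma mem_toChain {T : GridChain} {H : Subgroup (DihedralGroup 4)} :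
    H ∈ (toChain T).1 ↔ ∃ p ∈ T.1, std p = H := by
  simp [toChain]

lemma exists_common_reflection (S : Chain) :
    ∃ i : ZMod 4, ∀ H ∈ S.1, (∀ j, sr j ∉ H) ∨ sr i ∈ H := by
  classical
  obtain ⟨M, hM⟩ := (S.1.filter fun H => ∃ j, sr j ∈ H).exists_minimal
    ⟨⊤, Finset.mem_filter.2 ⟨S.2.2, 0, Subgroup.mem_top _⟩⟩
  obtain ⟨hMS, i, hi⟩ := Finset.mem_filter.1 hM.prop
  refine ⟨i, fun H hH => ?_⟩
  by_cases hr : ∃ j, sr j ∈ H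
  · right
    rcases S.2.1.total hMS hH with h | h
    · exact h hi
    · exact hM.le_of_le (Finset.mem_filter.2 ⟨hH, hr⟩) h hi
  · exact Or.inl (not_exists.1 hr)

lemma exists_grid_chain (S : Chain) : ∃ T : GridChain, Rel S (toChain T) := by
  classical
  obtain ⟨i, hi⟩ := exists_common_reflection S
  let φ : Subgroup (DihedralGroup 4) → Subgroup (DihedralGroup 4) :=
    fun H => H.map (shift i).toMonoidHom
  have hstd : ∀ H ∈ S.1, ∃ p, std p = φ H := by
    intro H hH
    apply exists_std_eq
    rcases hi H hH with h | h
    · exact Or.inl fun j => by simpa only [φ, mem_map_shift_sr] using h (j + i)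
    · exact Or.inr (by simpa only [φ, mem_map_shift_sr, zero_add] using h)
  have htop : φ ⊤ = ⊤ := Subgroup.map_top_of_surjective _ (shift i).surjective
  refine ⟨⟨Finset.univ.filter fun p => ∃ H ∈ S.1, φ H = std p, ?_, ?_⟩, shift i, ?_⟩
  · intro p hp q hq
    obtain ⟨H, hH, hHp⟩ := (Finset.mem_filter.1 hp).2
    obtain ⟨K, hK, hKq⟩ := (Finset.mem_filter.1 hq).2
    rw [← std_le_std, ← std_le_std, ← hHp, ← hKq]
    exact (S.2.1.total hH hK).imp (fun h => Subgroup.map_mono h) (fun h => Subgroup.map_mono h)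
  · exact Finset.mem_filter.2 ⟨Finset.mem_univ _, ⊤, S.2.2, by rw [std_top, htop]⟩
  · ext K
    simp only [Set.mem_image, SetLike.mem_coe, mem_toChain, Finset.mem_filter, Finset.mem_univ,
      true_and]
    constructor
    · rintro ⟨H, hH, rfl⟩
      obtain ⟨p, hp⟩ := hstd H hH
      exact ⟨p, ⟨H, hH, hp.symm⟩, hp⟩
    · rintro ⟨p, ⟨H, hH, hp⟩, rfl⟩
      exact ⟨H, hH, hp⟩

/-- The grid points `p` such that a chain contains an image of `std p` under some automorphism.
This is constant on classes of chains. -/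
def gridType (S : Chain) : Set (Fin 3 × Fin 2) :=
  {p | ∃ f : DihedralGroup 4 ≃* DihedralGroup 4, (std p).map f.toMonoidHom ∈ S.1}

lemma gridType_subset {S₁ S₂ : Chain} (g : DihedralGroup 4 ≃* DihedralGroup 4)
    (hg : ∀ H ∈ S₁.1, H.map g.toMonoidHom ∈ S₂.1) : gridType S₁ ⊆ gridType S₂ := by
  rintro p ⟨f, hf⟩
  refine ⟨f.trans g, ?_⟩
  have := hg _ hf
  rwa [Subgroup.map_map] at this

lemma gridType_eq_of_rel {S₁ S₂ : Chain} (h : Rel S₁ S₂) : gridType S₁ = gridType S₂ := by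
  obtain ⟨g, hg⟩ := h
  apply subset_antisymm
  · refine gridType_subset g fun H hH => ?_
    rw [← Finset.mem_coe, ← hg]
    exact ⟨H, hH, rfl⟩
  · refine gridType_subset g.symm fun K hK => ?_
    rw [← Finset.mem_coe, ← hg] at hK
    obtain ⟨H, hH, rfl⟩ := hK
    have hmap : (H.map g.toMonoidHom).map g.symm.toMonoidHom = H := by
      ext x
      rw [Subgroup.mem_map_equiv, Subgroup.mem_map_equiv]
      simp
    rw [hmap]
    exact hH

lemma gridType_toChain (T : GridChain) : gridType (toChain T) = T.1 := by
  ext p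
  constructor
  · rintro ⟨f, hf⟩
    obtain ⟨q, hq, hqp⟩ := mem_toChain.1 hf
    rwa [std_eq_of_map_eq hqp.symm]
  · intro hp
    exact ⟨MulEquiv.refl _, mem_toChain.2 ⟨p, hp, (Subgroup.map_id _).symm⟩⟩

lemma bijective_mk_toChain : Function.Bijective fun T => Quot.mk Rel (toChain T) := by
  constructor
  · intro T₁ T₂ h
    have := congrArg (Quot.lift gridType fun _ _ => gridType_eq_of_rel) h
    simp only [gridType_toChain] at this
    exact Subtype.ext (Finset.coe_injective this)
  · rintro ⟨S⟩
    obtain ⟨T, hT⟩ := exists_grid_chain S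
    exact ⟨T, (Quot.sound hT).symm⟩

lemma card_gridChain : Nat.card GridChain = 16 := by
  rw [Nat.card_eq_fintype_card, Fintype.card_subtype]
  decide +kernel

end ChainD8

/-- The number of equivalence classes, under the action of the
automorphism group, of chains of subgroups of the dihedral group of order 8
ending in the full group is exactly 16. -/
theorem card_chain_classes_dihedral8 :
    Nat.card (Quot (fun (S₁ S₂ : {S : Finset (Subgroup (DihedralGroup 4)) //
        IsChain (· ≤ ·) (S : Set (Subgroup (DihedralGroup 4))) ∧
          (⊤ : Subgroup (DihedralGroup 4)) ∈ S}) =>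
      ∃ f : DihedralGroup 4 ≃* DihedralGroup 4,
        (fun H => Subgroup.map f.toMonoidHom H) ''
            ((S₁ : Finset (Subgroup (DihedralGroup 4))) : Set (Subgroup (DihedralGroup 4)))
          = ((S₂ : Finset (Subgroup (DihedralGroup 4))) : Set (Subgroup (DihedralGroup 4))))) = 16 := by
  exact (Nat.card_congr (Equiv.ofBijective _ ChainD8.bijective_mk_toChain)).symm.trans
    ChainD8.card_gridChain
end
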